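/- Let (n_k)_{k≥1} be a sequence of positive integers with sup_k n_k = ∞, and let M = ℓ∞-⊕_{k=1}^∞ B(ℂ^{n_k}) be the ℓ∞-direct sum of the matrix algebras B(ℂ^{n_k}) (bounded sequences (a_k) with a_k ∈ B(ℂ^{n_k}), with the supremum norm and coordinatewise product). Then there exist ε > 0 and finitely many unitary elements u₁,…,u_n ∈ M such that no element T = Σᵢ aᵢ ⊗ bᵢ of the algebraic tensor product M ⊗ M with Σᵢ aᵢ bᵢ = 1 (the identity of M) satisfies ‖uⱼ·T − T·uⱼ‖_π < ε for all j = 1,…,n. Here u·T and T·u denote the bimodule actions u·(a ⊗ b) = (u a) ⊗ b and (a ⊗ b)·u = a ⊗ (b u), and ‖·‖_π is the projective tensor seminorm on M ⊗ M. -/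

import Mathlib

open scoped TensorProduct ENNReal

set_option maxHeartbeats 1000000
set_option synthInstance.maxHeartbeats 1000000

noncomputable section

/-- The projective tensor seminorm of an element `u` of the algebraic tensor product
`X ⊗ Y` of two normed spaces: the infimum of `Σⱼ ‖xⱼ‖·‖yⱼ‖` over all representations
`u = Σⱼ xⱼ ⊗ yⱼ`. -/
def projSeminorm {X Y : Type*} [NormedAddCommGroup X] [NormedSpace ℂ X]
    [NormedAddCommGroup Y] [NormedSpace ℂ Y] (u : X ⊗[ℂ] Y) : ℝ :=
  sInf {s : ℝ | ∃ (n : ℕ) (x : Fin n → X) (y : Fin n → Y),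
    u = ∑ j, x j ⊗ₜ[ℂ] y j ∧ s = ∑ j, ‖x j‖ * ‖y j‖}

/-- The left bimodule action on the algebraic tensor product `A ⊗ A`:
`a · (x ⊗ y) = (a x) ⊗ y`. -/
def actL {A : Type*} [NormedRing A] [NormedAlgebra ℂ A] (a : A) :
    A ⊗[ℂ] A →ₗ[ℂ] A ⊗[ℂ] A :=
  TensorProduct.map (LinearMap.mulLeft ℂ a) LinearMap.id

/-- The right bimodule action on the algebraic tensor product `A ⊗ A`:
`(x ⊗ y) · a = x ⊗ (y a)`. -/
def actR {A : Type*} [NormedRing A] [NormedAlgebra ℂ A] (a : A) :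
    A ⊗[ℂ] A →ₗ[ℂ] A ⊗[ℂ] A :=
  TensorProduct.map LinearMap.id (LinearMap.mulRight ℂ a)

/-- The `ℓ∞`-direct sum `M = ⊕_k B(ℂ^{n_k})` of the matrix algebras `B(ℂ^{n_k})`:
bounded sequences `(a_k)` with `a_k ∈ B(ℂ^{n_k})`, with the supremum norm and
coordinatewise product. -/
abbrev lpInftySum (n : ℕ → ℕ) :=
  lp (fun k => EuclideanSpace ℂ (Fin (n k)) →L[ℂ] EuclideanSpace ℂ (Fin (n k))) ∞

/-!
Suppose `T = ∑_{i < r} a_i ⊗ b_i` is a normalized diagonal almost commuting with `u`. Fix a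
coordinate `k` of dimension much larger than `r`, and an isometry `J : ℂ^N → ℂ^{n_k}` with `N` odd.
The slices `a ⊗ b ↦ J* a E_{ee} b J` send `T` to `N × N` matrices of rank at most `r` whose traces
sum to `N`, and the sum over `e` of their trace norms is at most `N ‖T‖_π`. So if `u_1, u_2, u_3`
restrict to unitaries `U_1, U_2, U_3` on the range of `J`, some slice `Φ` almost commutes with
each `U_j` in trace norm, relative to `tr Φ`.

By the Powers–Størmer inequality, `|Φ|^{1/2}` then almost commutes with each `U_j` in
Hilbert–Schmidt norm. The Weyl transform identifies `N × N` matrices under that norm with functions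
on the phase space `(ℤ/N)²`, and for suitable `U_j` turns conjugation into the action of generators
of `SL₂(ℤ/N)`. A ping-pong argument shows that an almost invariant function on phase space is
concentrated at `0`, so `|Φ|^{1/2}` is close to a multiple of the identity. This is impossible once
the rank `r` of `Φ` is less than `N / 2`, and `r` does not depend on `k`.
-/

section FrobeniusNorm

open Matrix
open scoped Matrix.Norms.L2Operator

variable {ι κ μ : Type*} [Fintype ι] [Fintype κ] [Fintype μ]

/-- The squared Frobenius (Hilbert–Schmidt) norm. The norm on matrices used throughout is the
`ℓ²` operator norm, so the Frobenius norm is not registered as an instance. -/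
def frobSq (A : Matrix ι κ ℂ) : ℝ := ∑ i, ∑ j, ‖A i j‖ ^ 2

lemma frobSq_nonneg (A : Matrix ι κ ℂ) : 0 ≤ frobSq A := by
  unfold frobSq; positivity

lemma frobSq_conjTranspose (A : Matrix ι κ ℂ) : frobSq Aᴴ = frobSq A := by
  simp only [frobSq, conjTranspose_apply, norm_star]
  exact Finset.sum_comm

lemma trace_conjTranspose_mul_self_eq_frobSq (A : Matrix ι κ ℂ) :
    trace (Aᴴ * A) = (frobSq A : ℂ) := by
  simp only [frobSq, trace, diag, mul_apply, conjTranspose_apply]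
  rw [Finset.sum_comm]
  push_cast
  refine Finset.sum_congr rfl fun i _ => Finset.sum_congr rfl fun j _ => ?_
  rw [mul_comm]
  exact Complex.mul_conj' _

lemma norm_trace_conjTranspose_mul_le (A B : Matrix ι κ ℂ) :
    ‖trace (Aᴴ * B)‖ ≤ √(frobSq A) * √(frobSq B) := by
  simp only [frobSq, trace, diag, mul_apply, conjTranspose_apply]
  rw [Finset.sum_comm, ← Finset.sum_product', ← Finset.sum_product', ← Finset.sum_product']
  refine (norm_sum_le _ _).trans ?_
  simp only [norm_mul, norm_star]
  exact Real.sum_mul_le_sqrt_mul_sqrt _ _ _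

lemma frobSq_sub (A B : Matrix ι κ ℂ) :
    frobSq (A - B) = frobSq A + frobSq B - 2 * (trace (Bᴴ * A)).re := by
  have hcross : (trace (Aᴴ * B)).re = (trace (Bᴴ * A)).re := by
    rw [← conjTranspose_conjTranspose B, ← conjTranspose_mul, trace_conjTranspose,
      conjTranspose_conjTranspose, Complex.star_def, Complex.conj_re]
  have htrace (C : Matrix ι κ ℂ) : frobSq C = (trace (Cᴴ * C)).re := by
    rw [trace_conjTranspose_mul_self_eq_frobSq, Complex.ofReal_re]
  rw [htrace, htrace A, htrace B]
  simp only [conjTranspose_sub, Matrix.sub_mul, Matrix.mul_sub, trace_sub, Complex.sub_re, hcross]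
  ring

variable [DecidableEq ι]

lemma frobSq_mul_le (W : Matrix μ ι ℂ) (A : Matrix ι κ ℂ) :
    frobSq (W * A) ≤ ‖W‖ ^ 2 * frobSq A := by
  unfold frobSq
  rw [Finset.sum_comm, Finset.sum_comm (f := fun i j => ‖A i j‖ ^ 2), Finset.mul_sum]
  refine Finset.sum_le_sum fun j _ => ?_
  have hcol := pow_le_pow_left₀ (norm_nonneg _)
    (l2_opNorm_mulVec W (WithLp.toLp 2 fun i => A i j)) 2
  rwa [mul_pow, EuclideanSpace.norm_sq_eq, EuclideanSpace.norm_sq_eq] at hcol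

lemma frobSq_mul_le_of_norm_le_one {W : Matrix μ ι ℂ} (hW : ‖W‖ ≤ 1) (A : Matrix ι κ ℂ) :
    frobSq (W * A) ≤ frobSq A :=
  (frobSq_mul_le W A).trans <|
    mul_le_of_le_one_left (frobSq_nonneg A) (pow_le_one₀ (norm_nonneg _) hW)

lemma frobSq_unitary_mul {U : Matrix ι ι ℂ} (hU : U ∈ unitaryGroup ι ℂ) (A : Matrix ι κ ℂ) :
    frobSq (U * A) = frobSq A := by
  rw [← Complex.ofReal_inj, ← trace_conjTranspose_mul_self_eq_frobSq, conjTranspose_mul,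
    Matrix.mul_assoc, ← Matrix.mul_assoc Uᴴ, ← star_eq_conjTranspose U, mem_unitaryGroup_iff'.1 hU,
    Matrix.one_mul, trace_conjTranspose_mul_self_eq_frobSq]

lemma frobSq_mul_unitary {U : Matrix ι ι ℂ} (hU : U ∈ unitaryGroup ι ℂ) (A : Matrix κ ι ℂ) :
    frobSq (A * U) = frobSq A := by
  rw [← frobSq_conjTranspose, conjTranspose_mul, ← star_eq_conjTranspose U,
    frobSq_unitary_mul (Unitary.star_mem hU), frobSq_conjTranspose]

lemma norm_le_one_of_mem_unitaryGroup {U : Matrix ι ι ℂ} (hU : U ∈ unitaryGroup ι ℂ) :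
    ‖U‖ ≤ 1 := by
  nontriviality Matrix ι ι ℂ
  exact (CStarRing.norm_of_mem_unitary hU).le

lemma frobSq_diagonal (v : ι → ℂ) : frobSq (diagonal v) = ∑ i, ‖v i‖ ^ 2 := by
  refine Finset.sum_congr rfl fun i _ => ?_
  rw [Finset.sum_eq_single i (fun j _ hj => by simp [diagonal_apply_ne _ hj.symm]) (by simp),
    diagonal_apply_eq]

lemma frobSq_eq_sum_sq_eigenvalues {h : Matrix ι ι ℂ} (hh : h.IsHermitian) :
    frobSq h = ∑ i, hh.eigenvalues i ^ 2 := by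
  conv_lhs => rw [hh.spectral_theorem]
  rw [Unitary.conjStarAlgAut_apply, frobSq_mul_unitary (Unitary.star_mem (SetLike.coe_mem _)),
    frobSq_unitary_mul (SetLike.coe_mem _), frobSq_diagonal]
  simp only [Function.comp_apply, Complex.coe_algebraMap, Complex.norm_real, Real.norm_eq_abs,
    sq_abs]

omit [DecidableEq ι] in
lemma sq_norm_trace_le_rank_mul_frobSq {h : Matrix ι ι ℂ} (hh : h.IsHermitian) :
    ‖trace h‖ ^ 2 ≤ h.rank * frobSq h := by
  classical
  have htrace : trace h = ((∑ i with hh.eigenvalues i ≠ 0, hh.eigenvalues i : ℝ) : ℂ) := by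
    rw [hh.trace_eq_sum_eigenvalues, Finset.sum_filter_ne_zero, Complex.ofReal_sum]; rfl
  rw [htrace, frobSq_eq_sum_sq_eigenvalues hh, hh.rank_eq_card_non_zero_eigs, Complex.norm_real,
    Real.norm_eq_abs, sq_abs, Fintype.card_subtype]
  calc (∑ i with hh.eigenvalues i ≠ 0, hh.eigenvalues i) ^ 2
      ≤ _ * ∑ i with hh.eigenvalues i ≠ 0, hh.eigenvalues i ^ 2 := sq_sum_le_card_mul_sum_sq
    _ ≤ _ * ∑ i, hh.eigenvalues i ^ 2 := by
        gcongr
        exact Finset.filter_subset _ _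

end FrobeniusNorm

section TraceNorm

open Matrix
open scoped Matrix.Norms.L2Operator

variable {ι : Type*} [Fintype ι] [DecidableEq ι]

/-- The functional `W ↦ trace (W * X)` on matrices with the operator norm, linearly in `X`. -/
def tracePairing : Matrix ι ι ℂ →ₗ[ℂ] Matrix ι ι ℂ →L[ℂ] ℂ where
  toFun X := LinearMap.toContinuousLinearMap (traceLinearMap ι ℂ ℂ ∘ₗ LinearMap.mulRight ℂ X)
  map_add' X Y := by ext W; simp [mul_add]
  map_smul' c X := by ext W; simp

/-- The trace norm, defined by duality with the operator norm. -/
def traceNorm (X : Matrix ι ι ℂ) : ℝ := ‖tracePairing X‖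

lemma traceNorm_nonneg (X : Matrix ι ι ℂ) : 0 ≤ traceNorm X := norm_nonneg _

lemma traceNorm_zero : traceNorm (0 : Matrix ι ι ℂ) = 0 := by
  unfold traceNorm
  rw [map_zero, norm_zero]

lemma norm_trace_mul_le (W X : Matrix ι ι ℂ) : ‖trace (W * X)‖ ≤ traceNorm X * ‖W‖ :=
  (tracePairing X).le_opNorm W

lemma norm_trace_mul_le_of_norm_le_one {W : Matrix ι ι ℂ} (hW : ‖W‖ ≤ 1) (X : Matrix ι ι ℂ) :
    ‖trace (W * X)‖ ≤ traceNorm X :=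
  (norm_trace_mul_le W X).trans (mul_le_of_le_one_right (traceNorm_nonneg X) hW)

lemma traceNorm_le_of_forall {X : Matrix ι ι ℂ} {c : ℝ} (hc : 0 ≤ c)
    (h : ∀ W, ‖trace (W * X)‖ ≤ c * ‖W‖) : traceNorm X ≤ c :=
  ContinuousLinearMap.opNorm_le_bound _ hc h

lemma re_trace_le_traceNorm (X : Matrix ι ι ℂ) : (trace X).re ≤ traceNorm X := by
  rw [← Matrix.one_mul X]
  exact (Complex.re_le_norm _).trans <| by
    simpa using norm_trace_mul_le_of_norm_le_one
      (norm_le_one_of_mem_unitaryGroup (one_mem (unitaryGroup ι ℂ))) X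

lemma traceNorm_add_le (X Y : Matrix ι ι ℂ) :
    traceNorm (X + Y) ≤ traceNorm X + traceNorm Y := by
  unfold traceNorm
  rw [map_add]
  exact norm_add_le _ _

lemma traceNorm_sub_rev (X Y : Matrix ι ι ℂ) : traceNorm (X - Y) = traceNorm (Y - X) := by
  unfold traceNorm
  rw [map_sub, map_sub, norm_sub_rev]

lemma traceNorm_le_add_sub (X Y : Matrix ι ι ℂ) :
    traceNorm Y ≤ traceNorm X + traceNorm (X - Y) := by
  rw [traceNorm_sub_rev]
  unfold traceNorm
  rw [map_sub]
  exact norm_le_norm_add_norm_sub' _ _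

lemma traceNorm_mul_le (W X : Matrix ι ι ℂ) : traceNorm (W * X) ≤ ‖W‖ * traceNorm X := by
  refine traceNorm_le_of_forall (by positivity [traceNorm_nonneg X]) fun W' => ?_
  calc ‖trace (W' * (W * X))‖ ≤ traceNorm X * ‖W' * W‖ := by
        rw [← mul_assoc]; exact norm_trace_mul_le _ _
    _ ≤ traceNorm X * (‖W'‖ * ‖W‖) := by
        gcongr
        exacts [traceNorm_nonneg X, norm_mul_le _ _]
    _ = ‖W‖ * traceNorm X * ‖W'‖ := by ring

lemma traceNorm_mul_le_sqrt_frobSq (A B : Matrix ι ι ℂ) :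
    traceNorm (A * B) ≤ √(frobSq A) * √(frobSq B) := by
  refine traceNorm_le_of_forall (by positivity) fun W => ?_
  calc ‖trace (W * (A * B))‖ ≤ √(frobSq (W * A)ᴴ) * √(frobSq B) := by
        rw [← mul_assoc]
        nth_rewrite 1 [← conjTranspose_conjTranspose (W * A)]
        exact norm_trace_conjTranspose_mul_le _ _
    _ ≤ √(‖W‖ ^ 2 * frobSq A) * √(frobSq B) := by
        rw [frobSq_conjTranspose]; gcongr; exact frobSq_mul_le W A
    _ = √(frobSq A) * √(frobSq B) * ‖W‖ := by
        rw [Real.sqrt_mul (sq_nonneg _), Real.sqrt_sq (norm_nonneg _)]; ring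

lemma traceNorm_mul_unitary_le {U : Matrix ι ι ℂ} (hU : U ∈ unitaryGroup ι ℂ)
    (X : Matrix ι ι ℂ) : traceNorm (X * U) ≤ traceNorm X := by
  refine traceNorm_le_of_forall (traceNorm_nonneg X) fun W => ?_
  rw [← mul_assoc, trace_mul_comm, ← mul_assoc, ← CStarRing.norm_mem_unitary_mul W hU]
  exact norm_trace_mul_le _ _

lemma traceNorm_vecMulVec_le (x y : ι → ℂ) :
    traceNorm (vecMulVec x y) ≤ ‖WithLp.toLp 2 x‖ * ‖WithLp.toLp 2 y‖ := by
  refine traceNorm_le_of_forall (by positivity) fun W => ?_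
  have hinner : trace (W * vecMulVec x y) =
      inner ℂ (WithLp.toLp 2 (star y)) (WithLp.toLp 2 (W *ᵥ x)) := by
    rw [mul_vecMulVec, trace_vecMulVec, EuclideanSpace.inner_eq_star_dotProduct, star_star]
  have hstar : ‖WithLp.toLp 2 (star y)‖ = ‖WithLp.toLp 2 y‖ := by
    simp only [EuclideanSpace.norm_eq, Pi.star_apply, norm_star]
  calc ‖trace (W * vecMulVec x y)‖
      ≤ ‖WithLp.toLp 2 y‖ * ‖WithLp.toLp 2 (W *ᵥ x)‖ := by
        rw [hinner, ← hstar]; exact norm_inner_le_norm _ _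
    _ ≤ ‖WithLp.toLp 2 y‖ * (‖W‖ * ‖WithLp.toLp 2 x‖) := by
        gcongr; exact l2_opNorm_mulVec W (WithLp.toLp 2 x)
    _ = ‖WithLp.toLp 2 x‖ * ‖WithLp.toLp 2 y‖ * ‖W‖ := by ring

end TraceNorm

section Polar

open Matrix
open scoped Matrix.Norms.L2Operator MatrixOrder ComplexOrder

variable {ι : Type*} [Fintype ι] [DecidableEq ι]

omit [DecidableEq ι] in
lemma re_trace_mul_nonneg {A B : Matrix ι ι ℂ} (hA : 0 ≤ A) (hB : 0 ≤ B) :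
    0 ≤ (trace (A * B)).re := by
  classical
  obtain ⟨C, rfl⟩ := CStarAlgebra.nonneg_iff_eq_star_mul_self.1 hA
  rw [mul_assoc, trace_mul_comm]
  exact (Complex.le_def.1
    (nonneg_iff_posSemidef.1 (star_right_conjugate_nonneg hB C)).trace_nonneg).1

lemma continuousOn_real_spectrum (A : Matrix ι ι ℂ) (f : ℝ → ℝ) :
    ContinuousOn f (spectrum ℝ A) :=
  A.finite_real_spectrum.continuousOn f

lemma cfc_mul_self {A : Matrix ι ι ℂ} (hA : IsSelfAdjoint A) (f : ℝ → ℝ) :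
    cfc f A * A = cfc (fun x => f x * x) A := by
  rw [cfc_mul f (fun x => x) A (continuousOn_real_spectrum A _) (continuousOn_real_spectrum A _),
    cfc_id' ℝ A hA]

lemma self_mul_cfc {A : Matrix ι ι ℂ} (hA : IsSelfAdjoint A) (f : ℝ → ℝ) :
    A * cfc f A = cfc (fun x => x * f x) A := by
  rw [cfc_mul (fun x => x) f A (continuousOn_real_spectrum A _) (continuousOn_real_spectrum A _),
    cfc_id' ℝ A hA]

lemma exists_sign {D : Matrix ι ι ℂ} (hD : IsSelfAdjoint D) :
    ∃ W : Matrix ι ι ℂ, ‖W‖ ≤ 1 ∧ W * D = CFC.abs D ∧ D * W = CFC.abs D := by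
  have habs : cfc (fun x : ℝ => |x|) D = CFC.abs D := (CFC.abs_eq_cfc_norm D).symm
  refine ⟨cfc (fun x : ℝ => (SignType.sign x : ℝ)) D, norm_cfc_le zero_le_one fun x _ => ?_, ?_, ?_⟩
  · obtain h | h | h := lt_trichotomy x 0 <;> simp [h]
  · simp only [cfc_mul_self hD, sign_mul_self, habs]
  · simp only [self_mul_cfc hD, self_mul_sign, habs]

/-- The Powers–Størmer inequality `‖h - k‖₂² ≤ ‖h² - k²‖₁`. -/
lemma frobSq_sub_le_traceNorm {h k : Matrix ι ι ℂ} (hh : 0 ≤ h) (hk : 0 ≤ k) :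
    frobSq (h - k) ≤ traceNorm (h * h - k * k) := by
  have hD : IsSelfAdjoint (h - k) := (IsSelfAdjoint.of_nonneg hh).sub (.of_nonneg hk)
  obtain ⟨W, hW, hWD, hDW⟩ := exists_sign hD
  set D := h - k with hDdef
  have hpos : 0 ≤ CFC.abs D + D := by
    rw [CFC.abs_add_self D]; exact smul_nonneg zero_le_two (CFC.posPart_nonneg D)
  have hneg : 0 ≤ CFC.abs D - D := by
    rw [CFC.abs_sub_self D]; exact smul_nonneg zero_le_two (CFC.negPart_nonneg D)
  have hcomm : trace (W * (h * h - k * k)) = trace (CFC.abs D * (h + k)) := by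
    have hsplit : (2 : ℂ) • (h * h - k * k) = D * (h + k) + (h + k) * D := by
      rw [hDdef, two_smul]; noncomm_ring
    refine mul_left_cancel₀ (two_ne_zero (α := ℂ)) ?_
    calc 2 * trace (W * (h * h - k * k)) = trace (W * (D * (h + k) + (h + k) * D)) := by
          rw [← hsplit, mul_smul_comm, trace_smul, smul_eq_mul]
      _ = trace (W * D * (h + k)) + trace (D * W * (h + k)) := by
          rw [mul_add, trace_add, mul_assoc, ← mul_assoc W (h + k), trace_mul_comm (W * (h + k)),
            mul_assoc D]
      _ = 2 * trace (CFC.abs D * (h + k)) := by rw [hWD, hDW, two_mul]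
  have hfrob : frobSq D = (trace (D * (h - k))).re := by
    rw [← Complex.ofReal_re (frobSq D), ← trace_conjTranspose_mul_self_eq_frobSq,
      ← star_eq_conjTranspose, hD.star_eq]
  have hk' := re_trace_mul_nonneg hpos hk
  have hh' := re_trace_mul_nonneg hneg hh
  refine le_trans ?_ ((Complex.re_le_norm _).trans (norm_trace_mul_le_of_norm_le_one hW _))
  rw [hcomm, hfrob]
  simp only [add_mul, sub_mul, mul_add, mul_sub, trace_add, trace_sub, Complex.add_re,
    Complex.sub_re] at hk' hh' ⊢
  linarith

lemma exists_commuting_pseudoinverse {P : Matrix ι ι ℂ} (hP : IsSelfAdjoint P) :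
    ∃ S : Matrix ι ι ℂ, IsSelfAdjoint S ∧ S * P = P * S ∧ P * (S * P) = P ∧ ‖S * P‖ ≤ 1 := by
  refine ⟨cfc (fun x : ℝ => x⁻¹) P, cfc_predicate _ P, ?_, ?_, ?_⟩
  · simp only [cfc_mul_self hP, self_mul_cfc hP, mul_comm]
  · simp only [cfc_mul_self hP, self_mul_cfc hP, ← mul_assoc, mul_inv_mul_cancel, cfc_id' ℝ P]
  · rw [cfc_mul_self hP]
    refine norm_cfc_le zero_le_one fun x _ => ?_
    obtain rfl | hx := eq_or_ne x 0 <;> simp [*]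

lemma exists_polar_decomposition (Φ : Matrix ι ι ℂ) :
    ∃ V : Matrix ι ι ℂ, ‖V‖ ≤ 1 ∧ V * CFC.abs Φ = Φ ∧ Vᴴ * Φ = CFC.abs Φ := by
  set P := CFC.abs Φ
  have hsq : star Φ * Φ = P * P := (CFC.abs_mul_abs Φ).symm
  obtain ⟨S, hS, hSP, hPSP, hnorm⟩ :=
    exists_commuting_pseudoinverse (.of_nonneg (CFC.abs_nonneg Φ) : IsSelfAdjoint P)
  refine ⟨Φ * S, ?_, ?_, ?_⟩
  · rw [← sq_le_one_iff₀ (norm_nonneg _), sq, ← CStarRing.norm_star_mul_self]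
    calc ‖star (Φ * S) * (Φ * S)‖ = ‖S * P * (S * P)‖ := by
          rw [star_mul, hS.star_eq, mul_assoc, ← mul_assoc (star Φ), hsq]
          nth_rewrite 2 [hSP]
          simp only [mul_assoc]
      _ ≤ 1 := (norm_mul_le _ _).trans (mul_le_one₀ hnorm (norm_nonneg _) hnorm)
  · have hzero : star (Φ * (S * P - 1)) * (Φ * (S * P - 1)) = 0 := by
      rw [star_mul, mul_assoc, ← mul_assoc (star Φ), hsq, mul_assoc P, mul_sub P, hPSP, mul_one,
        sub_self, mul_zero, mul_zero]
    rw [← sub_eq_zero, mul_assoc]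
    simpa only [mul_sub, mul_one] using CStarRing.star_mul_self_eq_zero_iff _ |>.1 hzero
  · rw [← star_eq_conjTranspose, star_mul, hS.star_eq, mul_assoc, hsq, ← mul_assoc, hSP, mul_assoc,
      hPSP]

/-- The square root of the modulus of `Φ`. -/
def absRoot (Φ : Matrix ι ι ℂ) : Matrix ι ι ℂ := CFC.sqrt (CFC.abs Φ)

lemma absRoot_nonneg (Φ : Matrix ι ι ℂ) : 0 ≤ absRoot Φ := CFC.sqrt_nonneg _

lemma conjTranspose_absRoot (Φ : Matrix ι ι ℂ) : (absRoot Φ)ᴴ = absRoot Φ :=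
  (IsSelfAdjoint.of_nonneg (absRoot_nonneg Φ)).star_eq

lemma absRoot_mul_absRoot (Φ : Matrix ι ι ℂ) : absRoot Φ * absRoot Φ = CFC.abs Φ :=
  CFC.sqrt_mul_sqrt_self _ (CFC.abs_nonneg Φ)

lemma trace_abs_eq_frobSq_absRoot (Φ : Matrix ι ι ℂ) :
    trace (CFC.abs Φ) = (frobSq (absRoot Φ) : ℂ) := by
  rw [← trace_conjTranspose_mul_self_eq_frobSq, conjTranspose_absRoot, absRoot_mul_absRoot]

lemma frobSq_absRoot (Φ : Matrix ι ι ℂ) : frobSq (absRoot Φ) = traceNorm Φ := by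
  obtain ⟨V, hV, hVabs, habs⟩ := exists_polar_decomposition Φ
  apply le_antisymm
  · calc frobSq (absRoot Φ) = (trace (Vᴴ * Φ)).re := by
          rw [habs, trace_abs_eq_frobSq_absRoot, Complex.ofReal_re]
      _ ≤ ‖trace (Vᴴ * Φ)‖ := Complex.re_le_norm _
      _ ≤ traceNorm Φ :=
          norm_trace_mul_le_of_norm_le_one ((l2_opNorm_conjTranspose V).trans_le hV) Φ
  · calc traceNorm Φ = traceNorm (V * absRoot Φ * absRoot Φ) := by
          rw [mul_assoc, absRoot_mul_absRoot, hVabs]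
      _ ≤ √(frobSq (V * absRoot Φ)) * √(frobSq (absRoot Φ)) := traceNorm_mul_le_sqrt_frobSq _ _
      _ ≤ √(frobSq (absRoot Φ)) * √(frobSq (absRoot Φ)) := by
          gcongr; exact frobSq_mul_le_of_norm_le_one hV _
      _ = frobSq (absRoot Φ) := Real.mul_self_sqrt (frobSq_nonneg _)

lemma rank_absRoot_le (Φ : Matrix ι ι ℂ) : (absRoot Φ).rank ≤ Φ.rank := by
  obtain ⟨V, -, -, habs⟩ := exists_polar_decomposition Φ
  rw [← rank_conjTranspose_mul_self, conjTranspose_absRoot, absRoot_mul_absRoot, ← habs]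
  exact rank_mul_le_right _ _

lemma sq_norm_trace_absRoot_le (Φ : Matrix ι ι ℂ) :
    ‖trace (absRoot Φ)‖ ^ 2 ≤ Φ.rank * traceNorm Φ := by
  rw [← frobSq_absRoot]
  refine (sq_norm_trace_le_rank_mul_frobSq (conjTranspose_absRoot Φ)).trans ?_
  gcongr
  exacts [frobSq_nonneg _, rank_absRoot_le Φ]

lemma frobSq_mul_sub_self_le {X k : Matrix ι ι ℂ} (hX : ‖X‖ ≤ 1) (hk : k.IsHermitian) :
    frobSq (X * k - k) ≤ 2 * (frobSq k - (trace (X * (k * k))).re) := by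
  rw [frobSq_sub, hk.eq, trace_mul_comm k, mul_assoc]
  linarith [frobSq_mul_le_of_norm_le_one hX k]

lemma frobSq_absRoot_sub_le (Φ Ψ : Matrix ι ι ℂ) :
    frobSq (absRoot Φ - absRoot Ψ) ≤
      traceNorm (Φ - Ψ) + 2 * √(traceNorm (Φ - Ψ) * traceNorm Ψ) := by
  obtain ⟨V, hV, -, hVΦ⟩ := exists_polar_decomposition Φ
  obtain ⟨V', hV', hVabs', -⟩ := exists_polar_decomposition Ψ
  set c := traceNorm (Φ - Ψ)
  set k := absRoot Ψ
  set E := Vᴴ * V' * k - k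
  have hVH : ‖Vᴴ‖ ≤ 1 := (l2_opNorm_conjTranspose V).trans_le hV
  have hcontraction : ‖Vᴴ * V'‖ ≤ 1 :=
    (norm_mul_le _ _).trans (mul_le_one₀ hVH (norm_nonneg _) hV')
  have hkk : V' * (k * k) = Ψ := by rw [absRoot_mul_absRoot, hVabs']
  have hdecomp : absRoot Φ * absRoot Φ - k * k = Vᴴ * (Φ - Ψ) + E * k := by
    rw [absRoot_mul_absRoot, ← hVΦ, sub_mul, mul_assoc, mul_assoc, hkk, mul_sub]
    abel
  have hE : frobSq E ≤ 4 * c := by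
    have hVΨ : traceNorm Φ - c ≤ (trace (Vᴴ * Ψ)).re := by
      have hVsub := (Complex.re_le_norm _).trans (norm_trace_mul_le_of_norm_le_one hVH (Φ - Ψ))
      rw [mul_sub, hVΦ, trace_sub, trace_abs_eq_frobSq_absRoot, frobSq_absRoot, Complex.sub_re,
        Complex.ofReal_re] at hVsub
      linarith
    have hcontr := frobSq_mul_sub_self_le hcontraction (conjTranspose_absRoot Ψ)
    rw [mul_assoc Vᴴ V' (_ * _), hkk, frobSq_absRoot] at hcontr
    have := traceNorm_le_add_sub Φ Ψ
    linarith
  calc frobSq (absRoot Φ - k) ≤ traceNorm (Vᴴ * (Φ - Ψ) + E * k) := by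
        rw [← hdecomp]; exact frobSq_sub_le_traceNorm (absRoot_nonneg Φ) (absRoot_nonneg Ψ)
    _ ≤ traceNorm (Vᴴ * (Φ - Ψ)) + traceNorm (E * k) := traceNorm_add_le _ _
    _ ≤ c + √(4 * c) * √(traceNorm Ψ) := by
        gcongr
        · exact (traceNorm_mul_le _ _).trans (mul_le_of_le_one_left (traceNorm_nonneg _) hVH)
        · rw [← frobSq_absRoot Ψ]
          exact (traceNorm_mul_le_sqrt_frobSq _ _).trans (by gcongr)
    _ = c + 2 * √(c * traceNorm Ψ) := by
        rw [show (4 : ℝ) = 2 ^ 2 by norm_num, Real.sqrt_mul (sq_nonneg _), Real.sqrt_sq zero_le_two,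
          mul_assoc, ← Real.sqrt_mul (traceNorm_nonneg _)]

lemma sqrt_unitary_conj {U A : Matrix ι ι ℂ} (hU : U ∈ unitaryGroup ι ℂ) (hA : 0 ≤ A) :
    CFC.sqrt (U * A * star U) = U * CFC.sqrt A * star U := by
  refine CFC.sqrt_unique ?_ (star_right_conjugate_nonneg (CFC.sqrt_nonneg A) U)
  calc U * CFC.sqrt A * star U * (U * CFC.sqrt A * star U)
      = U * CFC.sqrt A * (star U * U) * CFC.sqrt A * star U := by simp only [mul_assoc]
    _ = U * A * star U := by
        rw [mem_unitaryGroup_iff'.1 hU, mul_one, mul_assoc U, CFC.sqrt_mul_sqrt_self A hA]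

lemma absRoot_unitary_conj {U : Matrix ι ι ℂ} (hU : U ∈ unitaryGroup ι ℂ) (Φ : Matrix ι ι ℂ) :
    absRoot (U * Φ * star U) = U * absRoot Φ * star U := by
  have hsq : star (U * Φ * star U) * (U * Φ * star U) = U * (star Φ * Φ) * star U := by
    calc _ = U * star Φ * (star U * U) * Φ * star U := by
          simp only [star_mul, star_star, mul_assoc]
      _ = _ := by rw [mem_unitaryGroup_iff'.1 hU, mul_one, mul_assoc U]
  unfold absRoot CFC.abs
  rw [hsq, sqrt_unitary_conj hU (star_mul_self_nonneg Φ), sqrt_unitary_conj hU (CFC.sqrt_nonneg _)]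

lemma frobSq_unitary_conj_absRoot_sub_le {U : Matrix ι ι ℂ} (hU : U ∈ unitaryGroup ι ℂ)
    (Φ : Matrix ι ι ℂ) :
    frobSq (U * absRoot Φ * star U - absRoot Φ) ≤
      traceNorm (U * Φ - Φ * U) + 2 * √(traceNorm (U * Φ - Φ * U) * traceNorm Φ) := by
  have hcomm : traceNorm (U * Φ * star U - Φ) ≤ traceNorm (U * Φ - Φ * U) := by
    rw [show U * Φ * star U - Φ = (U * Φ - Φ * U) * star U by
      rw [sub_mul, mul_assoc Φ, mem_unitaryGroup_iff.1 hU, mul_one]]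
    exact traceNorm_mul_unitary_le (Unitary.star_mem hU) _
  rw [← absRoot_unitary_conj hU]
  refine (frobSq_absRoot_sub_le _ _).trans ?_
  gcongr
  exact traceNorm_nonneg Φ

end Polar

section AlmostInvariant

variable {α : Type*}

/-- A weight `w`, viewed as a finitely additive measure, is moved by at most `δ` on every finite
set by the permutation `σ`. -/
def AlmostInvariant (w : α → ℝ) (δ : ℝ) (σ : Equiv.Perm α) : Prop :=
  ∀ A : Finset α, |∑ p ∈ A, w (σ p) - ∑ p ∈ A, w p| ≤ δ

variable {w : α → ℝ} {δ δ' : ℝ} {σ τ : Equiv.Perm α}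

lemma AlmostInvariant.mul (hσ : AlmostInvariant w δ σ) (hτ : AlmostInvariant w δ' τ) :
    AlmostInvariant w (δ + δ') (σ * τ) := fun A => by
  have hστ := hσ (A.map τ.toEmbedding)
  simp only [Finset.sum_map, Equiv.coe_toEmbedding] at hστ
  exact (abs_sub_le _ _ _).trans (add_le_add hστ (hτ A))

lemma AlmostInvariant.inv (hσ : AlmostInvariant w δ σ) : AlmostInvariant w δ σ⁻¹ := fun A => by
  have hinv := hσ (A.map σ⁻¹.toEmbedding)
  simp only [Finset.sum_map, Equiv.coe_toEmbedding, ← Equiv.Perm.mul_apply, mul_inv_cancel,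
    Equiv.Perm.one_apply] at hinv
  rwa [abs_sub_comm]

lemma AlmostInvariant.sum_le_of_mapsTo (hσ : AlmostInvariant w δ σ) (hw : ∀ p, 0 ≤ w p)
    {A B : Finset α} (hAB : ∀ p ∈ A, σ p ∈ B) : ∑ p ∈ A, w p ≤ ∑ p ∈ B, w p + δ := by
  have hsub : A.map σ.toEmbedding ⊆ B := Finset.forall_mem_map.2 hAB
  have hmap := Finset.sum_le_sum_of_subset_of_nonneg hsub fun p _ _ => hw p
  simp only [Finset.sum_map, Equiv.coe_toEmbedding] at hmap
  linarith [(abs_le.1 (hσ A)).1]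

lemma sum_union_le [DecidableEq α] (hw : ∀ p, 0 ≤ w p) (A B : Finset α) :
    ∑ p ∈ A ∪ B, w p ≤ ∑ p ∈ A, w p + ∑ p ∈ B, w p := by
  rw [← Finset.sum_union_inter]
  exact le_add_of_nonneg_right (Finset.sum_nonneg fun p _ => hw p)

/-- The ping-pong argument: two disjoint almost copies of almost all of `Q` inside `Q`. -/
lemma sum_le_of_disjoint_images (hw : ∀ p, 0 ≤ w p) (hσ : AlmostInvariant w δ σ)
    (hτ : AlmostInvariant w δ' τ) {A Q : Finset α} {η : ℝ}
    (hQA : ∑ p ∈ Q, w p ≤ ∑ p ∈ A, w p + η) (hσQ : ∀ p ∈ A, σ p ∈ Q) (hτQ : ∀ p ∈ A, τ p ∈ Q)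
    (hdisj : ∀ p ∈ A, ∀ p' ∈ A, σ p ≠ τ p') : ∑ p ∈ Q, w p ≤ 2 * η + δ + δ' := by
  classical
  have hunion := Finset.sum_le_sum_of_subset_of_nonneg (f := w)
    (s := A.map σ.toEmbedding ∪ A.map τ.toEmbedding) (t := Q)
    (Finset.union_subset (Finset.forall_mem_map.2 hσQ) (Finset.forall_mem_map.2 hτQ))
    fun p _ _ => hw p
  rw [Finset.sum_union (Finset.disjoint_iff_ne.2
    (Finset.forall_mem_map.2 fun p hp => Finset.forall_mem_map.2 (hdisj p hp)))] at hunion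
  simp only [Finset.sum_map, Equiv.coe_toEmbedding] at hunion
  linarith [(abs_le.1 (hσ A)).1, (abs_le.1 (hτ A)).1]

end AlmostInvariant

section PingPong

variable {N : ℕ}

/-- The rotation `(k, l) ↦ (l, -k)` of the phase space `(ℤ/N)²`. -/
def phaseRotation (N : ℕ) : Equiv.Perm (ZMod N × ZMod N) where
  toFun p := (p.2, -p.1)
  invFun p := (-p.2, p.1)
  left_inv p := by simp
  right_inv p := by simp

/-- The shear `(k, l) ↦ (k, l + k)` of the phase space `(ℤ/N)²`. -/
def phaseShear (N : ℕ) : Equiv.Perm (ZMod N × ZMod N) where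
  toFun p := (p.1, p.2 + p.1)
  invFun p := (p.1, p.2 - p.1)
  left_inv p := by simp
  right_inv p := by simp

lemma phaseRotation_apply (k l : ZMod N) : phaseRotation N (k, l) = (l, -k) := rfl

lemma phaseShear_apply (k l : ZMod N) : phaseShear N (k, l) = (k, l + k) := rfl

lemma phaseRotation_conj_phaseShear_inv_apply (k l : ZMod N) :
    (phaseRotation N * (phaseShear N)⁻¹ * (phaseRotation N)⁻¹) (k, l) = (k + l, l) := by
  simp [phaseRotation, phaseShear, Equiv.Perm.inv_def, sub_eq_add_neg, add_comm]

/-- Residues in the middle half of `(-N/2, N/2]`: adding two of them does not wrap around. -/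
def IsNear (k : ZMod N) : Prop := 4 * |k.valMinAbs| < N

lemma valMinAbs_add_of_isNear [NeZero N] {k l : ZMod N} (hk : IsNear k) (hl : IsNear l) :
    (k + l).valMinAbs = k.valMinAbs + l.valMinAbs := by
  unfold IsNear at hk hl
  rw [ZMod.valMinAbs_spec]
  refine ⟨by push_cast [ZMod.coe_valMinAbs]; rfl, ?_⟩
  have := abs_le.1 (le_refl |k.valMinAbs|)
  have := abs_le.1 (le_refl |l.valMinAbs|)
  constructor <;> omega

lemma valMinAbs_neg_of_odd (hN : Odd N) (k : ZMod N) : (-k).valMinAbs = -k.valMinAbs := by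
  obtain ⟨q, rfl⟩ := hN
  exact ZMod.valMinAbs_neg_of_ne_half (by omega)

variable [NeZero N]

/-- The double cone `{(k, l) | k ≠ 0, k l ≥ 0}`, in terms of the least absolute residues. -/
def doubleCone (N : ℕ) [NeZero N] : Finset (ZMod N × ZMod N) :=
  {p | p.1.valMinAbs ≠ 0 ∧ 0 ≤ p.1.valMinAbs * p.2.valMinAbs}

lemma mem_doubleCone {k l : ZMod N} :
    (k, l) ∈ doubleCone N ↔ k.valMinAbs ≠ 0 ∧ 0 ≤ k.valMinAbs * l.valMinAbs := by
  simp [doubleCone]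

lemma phaseShear_mem_doubleCone {k l : ZMod N} (hk : IsNear k) (hl : IsNear l)
    (h : (k, l) ∈ doubleCone N) :
    (k, l + k) ∈ doubleCone N ∧ |k.valMinAbs| ≤ |(l + k).valMinAbs| := by
  rw [mem_doubleCone] at h ⊢
  rw [valMinAbs_add_of_isNear hl hk, ← sq_le_sq]
  refine ⟨⟨h.1, ?_⟩, ?_⟩ <;>
    nlinarith [h.2, mul_self_nonneg k.valMinAbs, mul_self_nonneg l.valMinAbs]

lemma conj_phaseShear_mem_doubleCone {k l : ZMod N} (hk : IsNear k) (hl : IsNear l)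
    (h : (k, l) ∈ doubleCone N) :
    (k + l, l) ∈ doubleCone N ∧ |l.valMinAbs| < |(k + l).valMinAbs| := by
  rw [mem_doubleCone] at h ⊢
  obtain ⟨hk0, hkl⟩ := h
  have hlt : |l.valMinAbs| < |k.valMinAbs + l.valMinAbs| := by
    rw [← sq_lt_sq]; nlinarith [mul_self_pos.2 hk0]
  rw [valMinAbs_add_of_isNear hk hl]
  refine ⟨⟨abs_pos.1 ((abs_nonneg _).trans_lt hlt), ?_⟩, hlt⟩
  nlinarith [mul_self_nonneg l.valMinAbs]

lemma phaseRotation_mem_doubleCone (hN : Odd N) {p : ZMod N × ZMod N} (hp : p ≠ 0)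
    (hcone : p ∉ doubleCone N) : phaseRotation N p ∈ doubleCone N := by
  obtain ⟨k, l⟩ := p
  rw [phaseRotation_apply, mem_doubleCone, valMinAbs_neg_of_odd hN]
  rw [mem_doubleCone, not_and_or, not_not, not_le, ZMod.valMinAbs_eq_zero] at hcone
  obtain rfl | hneg := hcone
  · simpa [ZMod.valMinAbs_eq_zero] using hp
  · exact ⟨fun h => by simp [h] at hneg, by nlinarith⟩

open Classical in
lemma sum_doubleCone_le {w : ZMod N × ZMod N → ℝ} (hw : ∀ p, 0 ≤ w p) {δ : ℝ}
    (hrot : AlmostInvariant w δ (phaseRotation N)) (hshear : AlmostInvariant w δ (phaseShear N))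
    (hfar : ∑ p with ¬ IsNear p.1, w p ≤ δ) : ∑ p ∈ doubleCone N, w p ≤ 10 * δ := by
  let X : Finset (ZMod N × ZMod N) := {p | ¬ IsNear p.1}
  let Y : Finset (ZMod N × ZMod N) := {p | ¬ IsNear p.2}
  have hY : ∑ p ∈ Y, w p ≤ ∑ p ∈ X, w p + δ := hrot.sum_le_of_mapsTo hw fun p hp => by
    simpa [X, Y, phaseRotation] using hp
  let A : Finset (ZMod N × ZMod N) := {p ∈ doubleCone N | IsNear p.1 ∧ IsNear p.2}
  have hA {k l : ZMod N} (h : (k, l) ∈ A) : (k, l) ∈ doubleCone N ∧ IsNear k ∧ IsNear l :=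
    Finset.mem_filter.1 h
  have hQA : ∑ p ∈ doubleCone N, w p ≤ ∑ p ∈ A, w p + 3 * δ := by
    have hcover : doubleCone N ⊆ A ∪ (X ∪ Y) := fun p hp => by
      simp only [A, X, Y, Finset.mem_union, Finset.mem_filter, Finset.mem_univ, true_and]
      tauto
    have := Finset.sum_le_sum_of_subset_of_nonneg hcover fun p _ _ => hw p
    linarith [sum_union_le hw A (X ∪ Y), sum_union_le hw X Y]
  have hpingpong := sum_le_of_disjoint_images hw hshear ((hrot.mul hshear.inv).mul hrot.inv) hQA
    (fun ⟨k, l⟩ h => (phaseShear_mem_doubleCone (hA h).2.1 (hA h).2.2 (hA h).1).1)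
    (fun ⟨k, l⟩ h => by
      rw [phaseRotation_conj_phaseShear_inv_apply]
      exact (conj_phaseShear_mem_doubleCone (hA h).2.1 (hA h).2.2 (hA h).1).1)
    (fun ⟨k, l⟩ h ⟨k', l'⟩ h' heq => by
      rw [phaseRotation_conj_phaseShear_inv_apply, phaseShear_apply, Prod.mk.injEq] at heq
      have hle := (phaseShear_mem_doubleCone (hA h).2.1 (hA h).2.2 (hA h).1).2
      have hlt := (conj_phaseShear_mem_doubleCone (hA h').2.1 (hA h').2.2 (hA h').1).2
      rw [heq.2, heq.1] at hle
      exact hle.not_gt hlt)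
  linarith

open Classical in
lemma sum_le_of_almostInvariant (hN : Odd N) {w : ZMod N × ZMod N → ℝ} (hw : ∀ p, 0 ≤ w p) {δ : ℝ}
    (hrot : AlmostInvariant w δ (phaseRotation N)) (hshear : AlmostInvariant w δ (phaseShear N))
    (hfar : ∑ p with ¬ IsNear p.1, w p ≤ δ) : ∑ p, w p ≤ w 0 + 21 * δ := by
  have hcone := sum_doubleCone_le hw hrot hshear hfar
  have hcompl := hrot.sum_le_of_mapsTo hw (A := (doubleCone N)ᶜ.erase 0) fun p hp => by
    rw [Finset.mem_erase, Finset.mem_compl] at hp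
    exact phaseRotation_mem_doubleCone hN hp.1 hp.2
  have hzero : (0 : ZMod N × ZMod N) ∈ (doubleCone N)ᶜ := by simp [doubleCone]
  rw [← Finset.sum_add_sum_compl (doubleCone N) w, ← Finset.add_sum_erase _ w hzero]
  linarith

end PingPong

section WeylTransform

open Matrix
open ZMod (stdAddChar)

variable {N : ℕ} [NeZero N]

lemma star_stdAddChar (k : ZMod N) : star (stdAddChar k) = stdAddChar (-k) :=
  (AddChar.map_neg_eq_conj _ _).symm

lemma norm_stdAddChar (k : ZMod N) : ‖stdAddChar k‖ = 1 := AddChar.norm_apply _ _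

lemma one_le_norm_stdAddChar_sub_one {k : ZMod N} (hk : ¬ IsNear k) :
    1 ≤ ‖stdAddChar k - 1‖ := by
  set a := k.valMinAbs
  have hN : (0 : ℝ) < N := Nat.cast_pos.2 (NeZero.pos N)
  have hlow : (N : ℝ) ≤ 4 * |(a : ℝ)| := by exact_mod_cast not_lt.1 hk
  have hupp : 2 * |(a : ℝ)| ≤ N := by
    have : 2 * |a| ≤ N := by rw [Int.abs_eq_natAbs]; have := k.natAbs_valMinAbs_le; omega
    exact_mod_cast this
  have hexp : stdAddChar k = Complex.exp ((2 * Real.pi * a / N : ℝ) * Complex.I) := by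
    rw [← k.coe_valMinAbs, ZMod.stdAddChar_coe]
    congr 1
    push_cast
    ring
  have hre : (stdAddChar k).re ≤ 0 := by
    rw [hexp, Complex.exp_ofReal_mul_I_re, ← Real.cos_abs, abs_div, abs_mul,
      abs_of_pos Real.two_pi_pos, Nat.abs_cast]
    apply Real.cos_nonpos_of_pi_div_two_le_of_le
    · rw [le_div_iff₀ hN]; nlinarith [Real.pi_pos]
    · rw [div_le_iff₀ hN]; nlinarith [Real.pi_pos]
  calc (1 : ℝ) ≤ |(stdAddChar k - 1).re| := by
        rw [Complex.sub_re, Complex.one_re, abs_of_nonpos] <;> linarith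
    _ ≤ ‖stdAddChar k - 1‖ := Complex.abs_re_le_norm _

lemma diagonal_stdAddChar_mem_unitaryGroup (v : ZMod N → ZMod N) :
    diagonal (fun i => stdAddChar (v i)) ∈ unitaryGroup (ZMod N) ℂ := by
  rw [mem_unitaryGroup_iff, star_eq_conjTranspose, diagonal_conjTranspose, diagonal_mul_diagonal,
    ← diagonal_one]
  congr 1
  ext i
  rw [Pi.star_apply, star_stdAddChar, ← AddChar.map_add_eq_mul, add_neg_cancel,
    AddChar.map_zero_eq_one]

/-- The clock matrix of `ℤ/N`. -/
def clock (N : ℕ) [NeZero N] : Matrix (ZMod N) (ZMod N) ℂ := diagonal fun i => stdAddChar i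

/-- The quadratic chirp of `ℤ/N`, which implements `phaseShear N` when `N` is odd (only then is `2`
invertible modulo `N`). -/
def chirp (N : ℕ) [NeZero N] : Matrix (ZMod N) (ZMod N) ℂ :=
  diagonal fun i => stdAddChar (-(2⁻¹ * i ^ 2))

/-- The normalized Fourier matrix of `ℤ/N`, which implements `phaseRotation N`. -/
def discreteFourier (N : ℕ) [NeZero N] : Matrix (ZMod N) (ZMod N) ℂ :=
  of fun i j => ((√N)⁻¹ : ℝ) * stdAddChar (i * j)

/-- The Weyl operator of the phase-space point `(k, l)`: modulation by `l` followed by translation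
by `k`. -/
def weyl (p : ZMod N × ZMod N) : Matrix (ZMod N) (ZMod N) ℂ :=
  of fun i j => if i = j + p.1 then stdAddChar (p.2 * j) else 0

lemma clock_mem_unitaryGroup : clock N ∈ unitaryGroup (ZMod N) ℂ :=
  diagonal_stdAddChar_mem_unitaryGroup _

lemma chirp_mem_unitaryGroup : chirp N ∈ unitaryGroup (ZMod N) ℂ :=
  diagonal_stdAddChar_mem_unitaryGroup _

lemma discreteFourier_mem_unitaryGroup : discreteFourier N ∈ unitaryGroup (ZMod N) ℂ := by
  have hN : (N : ℂ) ≠ 0 := Nat.cast_ne_zero.2 (NeZero.ne N)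
  have hsqrt : (((√N)⁻¹ : ℝ) : ℂ) * ((√N)⁻¹ : ℝ) = (N : ℂ)⁻¹ := by
    rw [← Complex.ofReal_mul, ← mul_inv, Real.mul_self_sqrt (Nat.cast_nonneg N),
      Complex.ofReal_inv, Complex.ofReal_natCast]
  rw [mem_unitaryGroup_iff']
  ext i j
  have hterm (x : ZMod N) : star (discreteFourier N x i) * discreteFourier N x j =
      (N : ℂ)⁻¹ * stdAddChar (x * (j - i)) := by
    rw [discreteFourier, of_apply, of_apply, star_mul', star_stdAddChar, Complex.star_def,
      Complex.conj_ofReal, ← hsqrt, show x * (j - i) = -(x * i) + x * j by ring,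
      AddChar.map_add_eq_mul]
    ring
  simp only [star_eq_conjTranspose, mul_apply, conjTranspose_apply, hterm]
  rw [← Finset.mul_sum, AddChar.sum_mulShift _ (ZMod.isPrimitive_stdAddChar N), ZMod.card,
    one_apply]
  obtain rfl | hij := eq_or_ne i j
  · simp [hN]
  · simp [hij, sub_ne_zero.2 hij.symm]

lemma weyl_mul_apply (p : ZMod N × ZMod N) (A : Matrix (ZMod N) (ZMod N) ℂ) (i j : ZMod N) :
    (weyl p * A) i j = stdAddChar (p.2 * (i - p.1)) * A (i - p.1) j := by
  simp [weyl, mul_apply, ← sub_eq_iff_eq_add]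

lemma mul_weyl_apply (p : ZMod N × ZMod N) (A : Matrix (ZMod N) (ZMod N) ℂ) (i j : ZMod N) :
    (A * weyl p) i j = A i (j + p.1) * stdAddChar (p.2 * j) := by
  simp [weyl, mul_apply]

lemma weyl_mul_clock (p : ZMod N × ZMod N) :
    weyl p * clock N = stdAddChar (-p.1) • (clock N * weyl p) := by
  ext i j
  rw [Matrix.smul_apply, clock, mul_diagonal, diagonal_mul, weyl, of_apply, smul_eq_mul]
  split_ifs with hij
  · simp only [← AddChar.map_add_eq_mul, hij]
    congr 1
    ring
  · simp

lemma weyl_mul_chirp (hN : Odd N) (p : ZMod N × ZMod N) :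
    weyl p * chirp N = stdAddChar (2⁻¹ * p.1 ^ 2) • (chirp N * weyl (phaseShear N p)) := by
  have htwo : (2 : ZMod N)⁻¹ * 2 = 1 := by
    simpa [mul_comm] using ZMod.coe_mul_inv_eq_one 2 hN.coprime_two_left
  ext i j
  rw [Matrix.smul_apply, chirp, mul_diagonal, diagonal_mul, weyl, weyl, of_apply, of_apply,
    smul_eq_mul, phaseShear_apply]
  split_ifs with hij
  · simp only [← AddChar.map_add_eq_mul, hij]
    congr 1
    linear_combination (p.1 * j) * htwo
  · simp

lemma weyl_mul_discreteFourier (p : ZMod N × ZMod N) :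
    weyl p * discreteFourier N =
      stdAddChar (-(p.1 * p.2)) • (discreteFourier N * weyl (phaseRotation N p)) := by
  obtain ⟨k, l⟩ := p
  ext i j
  rw [Matrix.smul_apply, weyl_mul_apply, mul_weyl_apply, phaseRotation_apply, discreteFourier,
    of_apply, of_apply, smul_eq_mul]
  have hphase : stdAddChar (l * (i - k)) * stdAddChar ((i - k) * j) =
      stdAddChar (-(k * l)) * (stdAddChar (i * (j + l)) * stdAddChar (-k * j)) := by
    simp only [← AddChar.map_add_eq_mul]
    congr 1
    ring
  linear_combination (((√N)⁻¹ : ℝ) : ℂ) * hphase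

/-- The coefficient of `h` at the Weyl operator `weyl p`, without the factor `1 / N` that would
make the Weyl expansion of `h` an identity. -/
def weylCoeff (h : Matrix (ZMod N) (ZMod N) ℂ) (p : ZMod N × ZMod N) : ℂ := trace ((weyl p)ᴴ * h)

lemma weylCoeff_apply (h : Matrix (ZMod N) (ZMod N) ℂ) (p : ZMod N × ZMod N) :
    weylCoeff h p = ∑ i, stdAddChar (-(p.2 * i)) * h (i + p.1) i := by
  simp [weylCoeff, trace, weyl, mul_apply, conjTranspose_apply, apply_ite star, star_stdAddChar]

lemma weylCoeff_zero (h : Matrix (ZMod N) (ZMod N) ℂ) : weylCoeff h 0 = trace h := by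
  simp [weylCoeff_apply, trace]

lemma weylCoeff_sub (h k : Matrix (ZMod N) (ZMod N) ℂ) (p : ZMod N × ZMod N) :
    weylCoeff (h - k) p = weylCoeff h p - weylCoeff k p := by
  rw [weylCoeff, Matrix.mul_sub, trace_sub]; rfl

lemma sum_sq_norm_weylCoeff (h : Matrix (ZMod N) (ZMod N) ℂ) :
    ∑ p, ‖weylCoeff h p‖ ^ 2 = N * frobSq h := by
  let G : Matrix (ZMod N) (ZMod N) ℂ := of fun i k => h (i + k) i
  have hG : frobSq G = frobSq h := by
    rw [← frobSq_conjTranspose h]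
    refine Finset.sum_congr rfl fun i _ => ?_
    simpa [G] using Equiv.sum_comp (Equiv.addLeft i) fun k => ‖h k i‖ ^ 2
  have hcoeff (k l : ZMod N) :
      ‖weylCoeff h (k, l)‖ ^ 2 = N * ‖((discreteFourier N)ᴴ * G) l k‖ ^ 2 := by
    have : ((discreteFourier N)ᴴ * G) l k = ((√N)⁻¹ : ℝ) * weylCoeff h (k, l) := by
      simp only [weylCoeff_apply, discreteFourier, mul_apply, G, conjTranspose_apply, of_apply,
        star_mul', star_stdAddChar, Finset.mul_sum, Complex.star_def, Complex.conj_ofReal,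
        mul_assoc, mul_comm l]
    rw [this, norm_mul, mul_pow, Complex.norm_real, norm_inv, inv_pow, Real.norm_eq_abs, sq_abs,
      Real.sq_sqrt (Nat.cast_nonneg N),
      mul_inv_cancel_left₀ (Nat.cast_ne_zero.2 (NeZero.ne N))]
  rw [← hG, ← frobSq_unitary_mul (Unitary.star_mem discreteFourier_mem_unitaryGroup) G,
    Fintype.sum_prod_type, Finset.sum_comm]
  simp only [hcoeff, ← Finset.mul_sum]
  rfl

lemma weylCoeff_unitary_conj {U : Matrix (ZMod N) (ZMod N) ℂ} (hU : U ∈ unitaryGroup (ZMod N) ℂ)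
    {p p' : ZMod N × ZMod N} {c : ℂ} (hp : weyl p * U = c • (U * weyl p'))
    (h : Matrix (ZMod N) (ZMod N) ℂ) :
    weylCoeff (U * h * star U) p = star c * weylCoeff h p' := by
  calc weylCoeff (U * h * star U) p = trace ((weyl p * U)ᴴ * (U * h)) := by
        rw [weylCoeff, conjTranspose_mul, ← Matrix.mul_assoc, trace_mul_comm, Matrix.mul_assoc Uᴴ,
          star_eq_conjTranspose]
    _ = star c * trace ((weyl p')ᴴ * (star U * U) * h) := by
        rw [hp, conjTranspose_smul, conjTranspose_mul, smul_mul, trace_smul, smul_eq_mul,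
          star_eq_conjTranspose]
        simp only [Matrix.mul_assoc]
    _ = star c * weylCoeff h p' := by rw [mem_unitaryGroup_iff'.1 hU, Matrix.mul_one, weylCoeff]

lemma norm_weylCoeff_clock_conj_sub {h : Matrix (ZMod N) (ZMod N) ℂ} {p : ZMod N × ZMod N}
    (hp : ¬ IsNear p.1) :
    ‖weylCoeff h p‖ ≤ ‖weylCoeff (clock N * h * star (clock N) - h) p‖ := by
  rw [weylCoeff_sub, weylCoeff_unitary_conj clock_mem_unitaryGroup (weyl_mul_clock p),
    ← sub_one_mul, norm_mul, star_stdAddChar, neg_neg]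
  exact le_mul_of_one_le_left (norm_nonneg _) (one_le_norm_stdAddChar_sub_one hp)

end WeylTransform

section SpectralGap

open Matrix
open ZMod (stdAddChar)

/-- If `g` agrees in norm with `f ∘ σ` and is `ℓ²`-close to `f`, then `‖f‖²` is almost invariant
under `σ`, by Cauchy–Schwarz applied to `‖g‖² - ‖f‖² = (‖g‖ - ‖f‖) (‖g‖ + ‖f‖)`. -/
lemma almostInvariant_sq_norm {α E : Type*} [Fintype α] [SeminormedAddCommGroup E] {f g : α → E}
    {σ : Equiv.Perm α} (hfg : ∀ p, ‖g p‖ = ‖f (σ p)‖) {r m : ℝ} (hr : 0 ≤ r)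
    (hf : ∑ p, ‖f p‖ ^ 2 = m) (hsub : ∑ p, ‖g p - f p‖ ^ 2 ≤ r ^ 2 * m) :
    AlmostInvariant (fun p => ‖f p‖ ^ 2) (2 * r * m) σ := fun A => by
  have hm : 0 ≤ m := hf ▸ by positivity
  have hg : ∑ p, ‖g p‖ ^ 2 = m := by
    simp only [hfg, ← hf]
    exact Equiv.sum_comp σ fun p => ‖f p‖ ^ 2
  have hadd : ∑ p, (‖g p‖ + ‖f p‖) ^ 2 ≤ 4 * m :=
    calc ∑ p, (‖g p‖ + ‖f p‖) ^ 2 ≤ ∑ p, (2 * ‖g p‖ ^ 2 + 2 * ‖f p‖ ^ 2) :=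
          Finset.sum_le_sum fun p _ => by linarith [add_sq_le (a := ‖g p‖) (b := ‖f p‖)]
      _ = 4 * m := by
          rw [Finset.sum_add_distrib, ← Finset.mul_sum, ← Finset.mul_sum, hf, hg]; ring
  calc |∑ p ∈ A, ‖f (σ p)‖ ^ 2 - ∑ p ∈ A, ‖f p‖ ^ 2|
      ≤ ∑ p ∈ A, ‖g p - f p‖ * (‖g p‖ + ‖f p‖) := by
        rw [← Finset.sum_sub_distrib]
        refine (Finset.abs_sum_le_sum_abs _ _).trans (Finset.sum_le_sum fun p _ => ?_)
        rw [← hfg, sq_sub_sq, abs_mul, abs_of_nonneg (by positivity), mul_comm]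
        gcongr
        exact abs_norm_sub_norm_le _ _
    _ ≤ ∑ p, ‖g p - f p‖ * (‖g p‖ + ‖f p‖) :=
        Finset.sum_le_univ_sum_of_nonneg fun p => by positivity
    _ ≤ √(∑ p, ‖g p - f p‖ ^ 2) * √(∑ p, (‖g p‖ + ‖f p‖) ^ 2) :=
        Real.sum_mul_le_sqrt_mul_sqrt _ _ _
    _ ≤ √(r ^ 2 * m) * √(4 * m) := by gcongr
    _ = 2 * r * m := by
        rw [← Real.sqrt_mul (by positivity), ← Real.sqrt_sq (by positivity : 0 ≤ 2 * r * m)]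
        ring_nf

variable {N : ℕ} [NeZero N]

lemma almostInvariant_weylCoeff {U h : Matrix (ZMod N) (ZMod N) ℂ}
    (hU : U ∈ unitaryGroup (ZMod N) ℂ) {σ : Equiv.Perm (ZMod N × ZMod N)}
    {θ : ZMod N × ZMod N → ZMod N}
    (hσ : ∀ p, weyl p * U = stdAddChar (θ p) • (U * weyl (σ p))) {r : ℝ} (hr : 0 ≤ r)
    (hUh : frobSq (U * h * star U - h) ≤ r ^ 2 * frobSq h) :
    AlmostInvariant (fun p => ‖weylCoeff h p‖ ^ 2) (2 * r * (N * frobSq h)) σ := by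
  refine almostInvariant_sq_norm (g := weylCoeff (U * h * star U)) (fun p => ?_) hr
    (sum_sq_norm_weylCoeff h) ?_
  · rw [weylCoeff_unitary_conj hU (hσ p), norm_mul, star_stdAddChar, norm_stdAddChar, one_mul]
  · simp only [← weylCoeff_sub, sum_sq_norm_weylCoeff]
    nlinarith [N.cast_nonneg (α := ℝ)]

/-- The three unitaries of the spectral gap estimate. -/
def gapUnitary (N : ℕ) [NeZero N] : Fin 3 → Matrix (ZMod N) (ZMod N) ℂ :=
  ![clock N, chirp N, discreteFourier N]

lemma gapUnitary_mem_unitaryGroup (j : Fin 3) : gapUnitary N j ∈ unitaryGroup (ZMod N) ℂ := by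
  fin_cases j
  exacts [clock_mem_unitaryGroup, chirp_mem_unitaryGroup, discreteFourier_mem_unitaryGroup]

lemma mul_frobSq_le_sq_norm_trace_of_gapUnitary (hN : Odd N) {h : Matrix (ZMod N) (ZMod N) ℂ}
    {r : ℝ} (hr : 0 ≤ r) (hr1 : r ≤ 1)
    (hgap : ∀ j, frobSq (gapUnitary N j * h * star (gapUnitary N j) - h) ≤ r ^ 2 * frobSq h) :
    (1 - 42 * r) * (N * frobSq h) ≤ ‖trace h‖ ^ 2 := by
  classical
  have hfar : ∑ p : ZMod N × ZMod N with ¬ IsNear p.1, ‖weylCoeff h p‖ ^ 2 ≤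
      2 * r * (N * frobSq h) :=
    calc _ ≤ ∑ p : ZMod N × ZMod N with ¬ IsNear p.1,
            ‖weylCoeff (clock N * h * star (clock N) - h) p‖ ^ 2 :=
          Finset.sum_le_sum fun p hp => by
            gcongr
            exact norm_weylCoeff_clock_conj_sub (Finset.mem_filter.1 hp).2
      _ ≤ N * frobSq (clock N * h * star (clock N) - h) := by
          rw [← sum_sq_norm_weylCoeff]
          exact Finset.sum_le_univ_sum_of_nonneg fun p => by positivity
      _ ≤ N * (r ^ 2 * frobSq h) := by gcongr; exact hgap 0
      _ = r ^ 2 * (N * frobSq h) := by ring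
      _ ≤ 2 * r * (N * frobSq h) := by
          have := frobSq_nonneg h
          gcongr
          nlinarith
  have hsum := sum_le_of_almostInvariant hN (fun p => sq_nonneg ‖weylCoeff h p‖)
    (almostInvariant_weylCoeff discreteFourier_mem_unitaryGroup weyl_mul_discreteFourier hr
      (hgap 2))
    (almostInvariant_weylCoeff chirp_mem_unitaryGroup (weyl_mul_chirp hN) hr (hgap 1))
    hfar
  rw [sum_sq_norm_weylCoeff, weylCoeff_zero] at hsum
  linarith

lemma le_two_mul_rank_of_traceNorm_commutator_le (hN : Odd N) {Φ : Matrix (ZMod N) (ZMod N) ℂ}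
    (htr : 0 < (trace Φ).re) (hΦ : ∀ j, traceNorm (gapUnitary N j * Φ - Φ * gapUnitary N j) ≤
      1 / 10 ^ 9 * (trace Φ).re) : (N : ℝ) ≤ 2 * Φ.rank := by
  have hpos : 0 < traceNorm Φ := htr.trans_le (re_trace_le_traceNorm Φ)
  have hgap (j : Fin 3) : frobSq (gapUnitary N j * absRoot Φ * star (gapUnitary N j) - absRoot Φ) ≤
      (1 / 84) ^ 2 * frobSq (absRoot Φ) := by
    have hcomm := (hΦ j).trans (mul_le_mul_of_nonneg_left (re_trace_le_traceNorm Φ) (by norm_num))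
    rw [frobSq_absRoot]
    calc _ ≤ _ := frobSq_unitary_conj_absRoot_sub_le (gapUnitary_mem_unitaryGroup j) Φ
      _ ≤ 1 / 10 ^ 9 * traceNorm Φ + 2 * √(1 / 10 ^ 9 * traceNorm Φ * traceNorm Φ) := by gcongr
      _ ≤ 1 / 10 ^ 9 * traceNorm Φ + 2 * (1 / 30000 * traceNorm Φ) := by
          gcongr
          exact Real.sqrt_le_iff.2 ⟨by positivity, by nlinarith [mul_pos hpos hpos]⟩
      _ ≤ (1 / 84) ^ 2 * traceNorm Φ := by nlinarith
  have htrace := (mul_frobSq_le_sq_norm_trace_of_gapUnitary hN (by norm_num) (by norm_num)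
    hgap).trans (sq_norm_trace_absRoot_le Φ)
  rw [frobSq_absRoot] at htrace
  exact le_of_mul_le_mul_right (by linarith) hpos

end SpectralGap

section Compression

open Matrix
open scoped Matrix.Norms.L2Operator

variable {ι κ : Type*} [Fintype ι] [DecidableEq ι] [Fintype κ] [DecidableEq κ]

/-- The operator acting as `U` on the range of the isometry `J` and as the identity on the
orthogonal complement. -/
def extendByOne (J : Matrix ι κ ℂ) (U : Matrix κ κ ℂ) : Matrix ι ι ℂ := J * U * Jᴴ + (1 - J * Jᴴ)

lemma extendByOne_mul {J : Matrix ι κ ℂ} (hJ : Jᴴ * J = 1) (U : Matrix κ κ ℂ) :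
    extendByOne J U * J = J * U := by
  simp only [extendByOne, Matrix.add_mul, Matrix.sub_mul, Matrix.mul_assoc, hJ, Matrix.mul_one,
    Matrix.one_mul, sub_self, add_zero]

omit [Fintype ι] [DecidableEq κ] in
lemma star_extendByOne (J : Matrix ι κ ℂ) (U : Matrix κ κ ℂ) :
    star (extendByOne J U) = extendByOne J (star U) := by
  simp only [extendByOne, star_eq_conjTranspose, conjTranspose_add, conjTranspose_sub,
    conjTranspose_mul, conjTranspose_one, conjTranspose_conjTranspose, Matrix.mul_assoc]

lemma conjTranspose_mul_extendByOne {J : Matrix ι κ ℂ} (hJ : Jᴴ * J = 1) (U : Matrix κ κ ℂ) :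
    Jᴴ * extendByOne J U = U * Jᴴ := by
  have hstar := congrArg conjTranspose (extendByOne_mul hJ (star U))
  rwa [conjTranspose_mul, conjTranspose_mul, ← star_eq_conjTranspose (extendByOne _ _),
    star_extendByOne, ← star_eq_conjTranspose (star U), star_star] at hstar

lemma extendByOne_mem_unitaryGroup {J : Matrix ι κ ℂ} (hJ : Jᴴ * J = 1) {U : Matrix κ κ ℂ}
    (hU : U ∈ unitaryGroup κ ℂ) : extendByOne J U ∈ unitaryGroup ι ℂ := by
  rw [mem_unitaryGroup_iff', star_extendByOne]
  nth_rewrite 2 [extendByOne]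
  rw [Matrix.mul_add, Matrix.mul_sub, Matrix.mul_assoc J U, ← Matrix.mul_assoc _ J,
    ← Matrix.mul_assoc _ J, extendByOne_mul hJ, Matrix.mul_assoc J, ← Matrix.mul_assoc (star U),
    mem_unitaryGroup_iff'.1 hU, Matrix.one_mul, Matrix.mul_one, extendByOne]
  abel

omit [DecidableEq ι] in
lemma frobSq_of_conjTranspose_mul_self_eq_one {J : Matrix ι κ ℂ} (hJ : Jᴴ * J = 1) :
    frobSq J = Fintype.card κ := by
  rw [← Complex.ofReal_inj, ← trace_conjTranspose_mul_self_eq_frobSq, hJ, trace_one,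
    Complex.ofReal_natCast]

omit [DecidableEq ι] [Fintype κ] [DecidableEq κ] in
lemma sum_vecMulVec_col_row (A : Matrix κ ι ℂ) (B : Matrix ι κ ℂ) :
    ∑ e, vecMulVec (A.col e) (B.row e) = A * B := by
  ext i j
  simp only [Matrix.sum_apply, vecMulVec_apply, col_apply, row_apply, mul_apply]

omit [DecidableEq κ] in
lemma rank_sum_vecMulVec_le {σ : Type*} [Fintype σ] (x y : σ → κ → ℂ) :
    (∑ i, vecMulVec (x i) (y i)).rank ≤ Fintype.card σ := by
  have hfactor := sum_vecMulVec_col_row (of x)ᵀ (of y)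
  exact hfactor ▸ (rank_mul_le_left _ _).trans (rank_le_card_width _)

omit [DecidableEq ι] [DecidableEq κ] in
lemma sum_sq_norm_row (A : Matrix ι κ ℂ) : ∑ e, ‖WithLp.toLp 2 (A.row e)‖ ^ 2 = frobSq A := by
  simp only [EuclideanSpace.norm_sq_eq, row_apply, frobSq]

omit [DecidableEq ι] [DecidableEq κ] in
lemma sum_sq_norm_col (A : Matrix κ ι ℂ) : ∑ e, ‖WithLp.toLp 2 (A.col e)‖ ^ 2 = frobSq A := by
  simp only [EuclideanSpace.norm_sq_eq, col_apply, frobSq]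
  exact Finset.sum_comm

lemma sum_traceNorm_vecMulVec_col_row_le {J : Matrix ι κ ℂ} (hJ : Jᴴ * J = 1)
    (X Y : Matrix ι ι ℂ) :
    ∑ e, traceNorm (vecMulVec ((Jᴴ * X).col e) ((Y * J).row e)) ≤
      Fintype.card κ * (‖X‖ * ‖Y‖) := by
  have hX : frobSq (Jᴴ * X) ≤ ‖X‖ ^ 2 * Fintype.card κ := by
    rw [← frobSq_conjTranspose, conjTranspose_mul, conjTranspose_conjTranspose,
      ← frobSq_of_conjTranspose_mul_self_eq_one hJ, ← l2_opNorm_conjTranspose X]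
    exact frobSq_mul_le _ _
  have hY : frobSq (Y * J) ≤ ‖Y‖ ^ 2 * Fintype.card κ := by
    rw [← frobSq_of_conjTranspose_mul_self_eq_one hJ]
    exact frobSq_mul_le _ _
  calc _ ≤ ∑ e, ‖WithLp.toLp 2 ((Jᴴ * X).col e)‖ * ‖WithLp.toLp 2 ((Y * J).row e)‖ :=
        Finset.sum_le_sum fun e _ => traceNorm_vecMulVec_le _ _
    _ ≤ √(frobSq (Jᴴ * X)) * √(frobSq (Y * J)) := by
        rw [← sum_sq_norm_col, ← sum_sq_norm_row]
        exact Real.sum_mul_le_sqrt_mul_sqrt _ _ _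
    _ ≤ √(‖X‖ ^ 2 * Fintype.card κ) * √(‖Y‖ ^ 2 * Fintype.card κ) := by gcongr
    _ = Fintype.card κ * (‖X‖ * ‖Y‖) := by
        rw [Real.sqrt_mul (sq_nonneg _), Real.sqrt_mul (sq_nonneg _), Real.sqrt_sq (norm_nonneg _),
          Real.sqrt_sq (norm_nonneg _), mul_mul_mul_comm, Real.mul_self_sqrt (Nat.cast_nonneg _),
          mul_comm]

end Compression

section Slice

open Matrix
open scoped Matrix.Norms.L2Operator

lemma le_mul_projSeminorm {X Y : Type*} [NormedAddCommGroup X] [NormedSpace ℂ X]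
    [NormedAddCommGroup Y] [NormedSpace ℂ Y] {p : X ⊗[ℂ] Y → ℝ} (hzero : p 0 = 0)
    (hadd : ∀ u v, p (u + v) ≤ p u + p v) {c : ℝ} (hc : 0 ≤ c)
    (htmul : ∀ x y, p (x ⊗ₜ y) ≤ c * (‖x‖ * ‖y‖)) (u : X ⊗[ℂ] Y) : p u ≤ c * projSeminorm u := by
  rw [projSeminorm, ← smul_eq_mul, ← Real.sInf_smul_of_nonneg hc]
  refine le_csInf (Set.Nonempty.smul_set ?_) ?_
  · obtain ⟨n, x, y, hu⟩ := TensorProduct.exists_sum_tmul_eq u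
    exact ⟨_, n, x, y, hu, rfl⟩
  · rintro _ ⟨_, ⟨n, x, y, rfl, rfl⟩, rfl⟩
    simp only [smul_eq_mul, Finset.mul_sum]
    exact (Finset.le_sum_of_subadditive p hzero.le hadd _ _).trans
      (Finset.sum_le_sum fun j _ => htmul _ _)

variable {ι κ : Type*} [Fintype ι] [DecidableEq ι]
variable {M : Type*} [NormedRing M] [NormedAlgebra ℂ M]

/-- The `e`-th rank-one slice `a ⊗ b ↦ J* ρ(a) E_{ee} ρ(b) J`, whose sum over `e` is the
compression `J* ρ(ab) J`. -/
def slice (ρ : M →ₐ[ℂ] Matrix ι ι ℂ) (J : Matrix ι κ ℂ) (e : ι) : M ⊗[ℂ] M →ₗ[ℂ] Matrix κ κ ℂ :=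
  TensorProduct.lift <| LinearMap.mk₂ ℂ
    (fun a b => vecMulVec ((Jᴴ * ρ a).col e) ((ρ b * J).row e))
    (fun a a' b => by rw [← add_vecMulVec, map_add, Matrix.mul_add]; rfl)
    (fun c a b => by rw [← smul_vecMulVec, map_smul, Matrix.mul_smul]; rfl)
    (fun a b b' => by rw [← vecMulVec_add, map_add, Matrix.add_mul]; rfl)
    (fun c a b => by rw [← vecMulVec_smul, map_smul, Matrix.smul_mul]; rfl)

lemma slice_tmul (ρ : M →ₐ[ℂ] Matrix ι ι ℂ) (J : Matrix ι κ ℂ) (e : ι) (a b : M) :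
    slice ρ J e (a ⊗ₜ b) = vecMulVec ((Jᴴ * ρ a).col e) ((ρ b * J).row e) := rfl

variable {ρ : M →ₐ[ℂ] Matrix ι ι ℂ} {J : Matrix ι κ ℂ}

lemma sum_slice (T : M ⊗[ℂ] M) : ∑ e, slice ρ J e T = Jᴴ * ρ (LinearMap.mul' ℂ M T) * J := by
  induction T with
  | zero => simp only [map_zero, Finset.sum_const_zero, Matrix.mul_zero, Matrix.zero_mul]
  | add S T hS hT =>
    simp only [map_add, Finset.sum_add_distrib, hS, hT, Matrix.add_mul, Matrix.mul_add]
  | tmul a b =>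
    simp only [slice_tmul, sum_vecMulVec_col_row, LinearMap.mul'_apply, map_mul, Matrix.mul_assoc]

variable [Fintype κ]

lemma slice_actL {u : M} {U : Matrix κ κ ℂ} (hu : Jᴴ * ρ u = U * Jᴴ) (e : ι) (T : M ⊗[ℂ] M) :
    slice ρ J e (actL u T) = U * slice ρ J e T := by
  induction T with
  | zero => simp only [map_zero, Matrix.mul_zero]
  | add S T hS hT => simp only [map_add, hS, hT, Matrix.mul_add]
  | tmul a b =>
    rw [actL, TensorProduct.map_tmul, slice_tmul, slice_tmul, LinearMap.mulLeft_apply, map_mul,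
      ← Matrix.mul_assoc, hu, Matrix.mul_assoc, mul_vecMulVec]
    rfl

lemma slice_actR {u : M} {U : Matrix κ κ ℂ} (hu : ρ u * J = J * U) (e : ι) (T : M ⊗[ℂ] M) :
    slice ρ J e (actR u T) = slice ρ J e T * U := by
  induction T with
  | zero => simp only [map_zero, Matrix.zero_mul]
  | add S T hS hT => simp only [map_add, hS, hT, Matrix.add_mul]
  | tmul a b =>
    rw [actR, TensorProduct.map_tmul, slice_tmul, slice_tmul, LinearMap.mulRight_apply, map_mul,
      Matrix.mul_assoc, hu, ← Matrix.mul_assoc, vecMulVec_mul]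
    rfl

lemma rank_slice_sum_tmul_le (e : ι) {r : ℕ} (a b : Fin r → M) :
    (slice ρ J e (∑ i, a i ⊗ₜ b i)).rank ≤ r := by
  simp only [map_sum, slice_tmul]
  exact (rank_sum_vecMulVec_le _ _).trans_eq (Fintype.card_fin r)

variable [DecidableEq κ]

lemma sum_traceNorm_slice_le (hρ : ∀ x, ‖ρ x‖ ≤ ‖x‖) (hJ : Jᴴ * J = 1) (T : M ⊗[ℂ] M) :
    ∑ e, traceNorm (slice ρ J e T) ≤ Fintype.card κ * projSeminorm T := by
  refine le_mul_projSeminorm (p := fun T => ∑ e, traceNorm (slice ρ J e T)) ?_ ?_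
    (Nat.cast_nonneg _) ?_ T
  · simp only [map_zero, traceNorm_zero, Finset.sum_const_zero]
  · intro S T
    rw [← Finset.sum_add_distrib]
    exact Finset.sum_le_sum fun e _ => by rw [map_add]; exact traceNorm_add_le _ _
  · intro a b
    refine (sum_traceNorm_vecMulVec_col_row_le hJ (ρ a) (ρ b)).trans ?_
    gcongr
    exacts [hρ a, hρ b]

/-- Averaging over the slices: their traces sum to `card κ`, so one of them has large trace
compared with its commutators. -/
lemma exists_traceNorm_commutator_slice_le {τ : Type*} [Fintype τ] [Nonempty κ]
    (hρ : ∀ x, ‖ρ x‖ ≤ ‖x‖) (hJ : Jᴴ * J = 1) {u : τ → M} {U : τ → Matrix κ κ ℂ}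
    (hu : ∀ j, ρ (u j) = extendByOne J (U j)) {T : M ⊗[ℂ] M} (hT : LinearMap.mul' ℂ M T = 1)
    {δ : ℝ} (hcomm : ∑ j, projSeminorm (actL (u j) T - actR (u j) T) < δ) :
    ∃ e, ∑ j, traceNorm (U j * slice ρ J e T - slice ρ J e T * U j) <
      δ * (trace (slice ρ J e T)).re := by
  have hslice (e : ι) (j : τ) : U j * slice ρ J e T - slice ρ J e T * U j =
      slice ρ J e (actL (u j) T - actR (u j) T) := by
    rw [map_sub, slice_actL ((hu j).symm ▸ conjTranspose_mul_extendByOne hJ _),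
      slice_actR ((hu j).symm ▸ extendByOne_mul hJ _)]
  have htrace : ∑ e, (trace (slice ρ J e T)).re = Fintype.card κ := by
    rw [← Complex.re_sum, ← trace_sum, sum_slice, hT, map_one, Matrix.mul_one, hJ, trace_one,
      Complex.natCast_re]
  simp only [hslice]
  refine (Finset.exists_lt_of_sum_lt (s := Finset.univ) ?_).imp fun e he => he.2
  calc ∑ e, ∑ j, traceNorm (slice ρ J e (actL (u j) T - actR (u j) T))
      ≤ ∑ j, Fintype.card κ * projSeminorm (actL (u j) T - actR (u j) T) := by
        rw [Finset.sum_comm]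
        exact Finset.sum_le_sum fun j _ => sum_traceNorm_slice_le hρ hJ _
    _ < Fintype.card κ * δ := by
        rw [← Finset.mul_sum]
        exact mul_lt_mul_of_pos_left hcomm (Nat.cast_pos.2 Fintype.card_pos)
    _ = ∑ e, δ * (trace (slice ρ J e T)).re := by rw [← Finset.mul_sum, htrace, mul_comm]

lemma le_two_mul_of_projSeminorm_commutator_lt {N : ℕ} [NeZero N] (hN : Odd N)
    {J : Matrix ι (ZMod N) ℂ} (hρ : ∀ x, ‖ρ x‖ ≤ ‖x‖) (hJ : Jᴴ * J = 1) {u : Fin 3 → M}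
    (hu : ∀ j, ρ (u j) = extendByOne J (gapUnitary N j)) {T : M ⊗[ℂ] M} {r : ℕ} {a b : Fin r → M}
    (hT : T = ∑ i, a i ⊗ₜ b i) (hone : LinearMap.mul' ℂ M T = 1)
    (hcomm : ∀ j, projSeminorm (actL (u j) T - actR (u j) T) < 1 / 10 ^ 10) : N ≤ 2 * r := by
  have hsum : ∑ j, projSeminorm (actL (u j) T - actR (u j) T) < 1 / 10 ^ 9 := by
    rw [Fin.sum_univ_three]
    linarith [hcomm 0, hcomm 1, hcomm 2]
  obtain ⟨e, he⟩ := exists_traceNorm_commutator_slice_le hρ hJ hu hone hsum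
  set Φ := slice ρ J e T
  have hΦ (j : Fin 3) : traceNorm (gapUnitary N j * Φ - Φ * gapUnitary N j) ≤
      1 / 10 ^ 9 * (trace Φ).re :=
    (Finset.single_le_sum (f := fun j => traceNorm (gapUnitary N j * Φ - Φ * gapUnitary N j))
      (fun j _ => traceNorm_nonneg _) (Finset.mem_univ j)).trans he.le
  have htr : 0 < (trace Φ).re := by
    have : 0 < 1 / 10 ^ 9 * (trace Φ).re :=
      (Finset.sum_nonneg fun j _ => traceNorm_nonneg _).trans_lt he
    linarith
  have hrank : (Φ.rank : ℝ) ≤ r := by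
    exact_mod_cast hT ▸ rank_slice_sum_tmul_le e a b
  have hle := le_two_mul_rank_of_traceNorm_commutator_le hN htr hΦ
  exact_mod_cast hle.trans (mul_le_mul_of_nonneg_left hrank zero_le_two)

end Slice

section LpInfty

open Matrix
open scoped Matrix.Norms.L2Operator

lemma exists_odd_isometry (κ : Type*) [Fintype κ] [Nonempty κ] :
    ∃ (N : ℕ) (_ : NeZero N) (J : Matrix κ (ZMod N) ℂ),
      Odd N ∧ Fintype.card κ ≤ N + 1 ∧ Jᴴ * J = 1 := by
  classical
  have hcard : 0 < Fintype.card κ := Fintype.card_pos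
  let N := 2 * ((Fintype.card κ - 1) / 2) + 1
  have hN : Fintype.card (ZMod N) ≤ Fintype.card κ := by rw [ZMod.card]; omega
  obtain ⟨φ⟩ := Function.Embedding.nonempty_of_card_le hN
  refine ⟨N, inferInstance, (1 : Matrix κ κ ℂ).submatrix id φ, odd_two_mul_add_one _, by omega, ?_⟩
  rw [conjTranspose_submatrix, conjTranspose_one, ← submatrix_mul _ _ _ _ _ Function.bijective_id,
    Matrix.one_mul, submatrix_one_embedding]

variable {α : Type*} {A : α → Type*} [∀ k, CStarAlgebra (A k)] [∀ k, Nontrivial (A k)]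

/-- The element of the `ℓ∞`-direct sum with prescribed unitary coordinates. -/
def lpOfUnitary (W : ∀ k, unitary (A k)) : lp A ∞ :=
  ⟨fun k => W k, memℓp_infty ⟨1, by
    rintro _ ⟨k, rfl⟩
    exact (CStarRing.norm_of_mem_unitary (W k).2).le⟩⟩

lemma lpOfUnitary_mem_unitary (W : ∀ k, unitary (A k)) : lpOfUnitary W ∈ unitary (lp A ∞) :=
  Unitary.mem_iff.2 ⟨lp.ext (funext fun k => (Unitary.mem_iff.1 (W k).2).1),
    lp.ext (funext fun k => (Unitary.mem_iff.1 (W k).2).2)⟩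

/-- The `k`-th coordinate of the `ℓ∞`-direct sum, as an algebra homomorphism. -/
def lpCoord (k : α) : lp A ∞ →ₐ[ℂ] A k where
  toFun x := x k
  map_one' := rfl
  map_mul' _ _ := rfl
  map_zero' := rfl
  map_add' _ _ := rfl
  commutes' _ := rfl

theorem lpInftySum_no_approx_invariant_diagonal_general {κ : α → Type*}
    [∀ k, Fintype (κ k)] (φ : ∀ k, A k ≃⋆ₐ[ℂ] Matrix (κ k) (κ k) ℂ)
    (hsup : ∀ N : ℕ, ∃ k, N ≤ Fintype.card (κ k)) :
    ∃ ε > (0 : ℝ), ∃ (t : ℕ) (u : Fin t → lp A ∞), (∀ j, u j ∈ unitary (lp A ∞)) ∧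
      ∀ T : lp A ∞ ⊗[ℂ] lp A ∞, LinearMap.mul' ℂ (lp A ∞) T = 1 →
        ¬ ∀ j, projSeminorm (actL (u j) T - actR (u j) T) < ε := by
  classical
  have (k : α) : Nonempty (κ k) := by
    by_contra! h
    exact not_subsingleton (A k) (φ k).toEquiv.subsingleton
  choose N hN₀ J hodd hcard hJ using fun k => exists_odd_isometry (κ k)
  let U (j : Fin 3) (k : α) : unitaryGroup (κ k) ℂ :=
    ⟨_, extendByOne_mem_unitaryGroup (hJ k) (gapUnitary_mem_unitaryGroup (N := N k) j)⟩
  let u (j : Fin 3) : lp A ∞ := lpOfUnitary fun k => ⟨_, Unitary.map_mem (φ k).symm (U j k).2⟩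
  refine ⟨1 / 10 ^ 10, by norm_num, 3, u, fun j => lpOfUnitary_mem_unitary _, fun T hT hcomm => ?_⟩
  obtain ⟨r, a, b, hrep⟩ := TensorProduct.exists_sum_tmul_eq T
  obtain ⟨k, hk⟩ := hsup (2 * r + 2)
  have hρ (x : lp A ∞) : ‖φ k (x k)‖ ≤ ‖x‖ :=
    (NonUnitalStarAlgHom.norm_apply_le (φ k) (x k)).trans
      (lp.norm_apply_le_norm ENNReal.top_ne_zero x k)
  have hle : N k ≤ 2 * r := le_two_mul_of_projSeminorm_commutator_lt
    (ρ := (φ k).toAlgEquiv.toAlgHom.comp (lpCoord k)) (hodd k) hρ (hJ k)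
    (fun j => (φ k).apply_symm_apply (U j k)) hrep hT hcomm
  have := hcard k
  omega

end LpInfty

/-- Let `(n_k)` be a sequence of positive integers with `sup_k n_k = ∞` and let
`M = ℓ∞-⊕_k B(ℂ^{n_k})`.  Then there exist `ε > 0` and finitely many unitaries
`u₁,…,u_t ∈ M` such that no `T ∈ M ⊗ M` (algebraic tensor product) whose image under
the multiplication map is `1` satisfies `‖uⱼ·T − T·uⱼ‖_π < ε` for all `j`.  Hence `M`
admits no approximately invariant normalized diagonal and is not approximately
amenable. -/
theorem lpInftySum_no_approx_invariant_diagonal (n : ℕ → ℕ) (hpos : ∀ k, 0 < n k)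
    [∀ k, Nontrivial (EuclideanSpace ℂ (Fin (n k)))]
    (hsup : ∀ N : ℕ, ∃ k, N ≤ n k) :
    ∃ ε > (0 : ℝ), ∃ (t : ℕ) (u : Fin t → lpInftySum n),
      (∀ j, u j ∈ unitary (lpInftySum n)) ∧
      ∀ T : lpInftySum n ⊗[ℂ] lpInftySum n, LinearMap.mul' ℂ (lpInftySum n) T = 1 →
        ¬ (∀ j, projSeminorm (actL (u j) T - actR (u j) T) < ε) :=
  lpInftySum_no_approx_invariant_diagonal_general
    (fun k => (Matrix.toEuclideanCLM (n := Fin (n k)) (𝕜 := ℂ)).symm)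
    (by simpa only [Fintype.card_fin] using hsup)

end
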